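/- Let ν ≥ 0 be a real number and define J_ν : (0,∞) → ℝ by J_ν(z) = (z/2)^ν · Σ_{n≥0} (−z²/4)ⁿ/(n!·Γ(ν + n + 1)), where Γ is the real Gamma function. Then J_ν is twice differentiable on (0,∞) and satisfies Bessel's equation z²·J_ν''(z) + z·J_ν'(z) + (z² − ν²)·J_ν(z) = 0 for all z > 0. -/

import Mathlib

/-!
Write `F b` for the regularized hypergeometric function `₀F₁` with parameter `b`. It is entire with
derivative `F (b + 1)`, and `1 / Γ(s) = s / Γ(s + 1)` gives
`F b z = b * F (b + 1) z + z * F (b + 2) z`. For `J_ν(z) = (z/2)^ν F (ν + 1) (-z²/4)` these become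
the ladder relations `J_ν' = (ν/z) J_ν - J_{ν+1}` and `J_{ν+1}' = J_ν - ((ν+1)/z) J_{ν+1}`, and
eliminating `J_{ν+1}` between them is Bessel's equation. For real `ν` the equation has real
coefficients on `(0,∞)`, so it passes to real parts.
-/

/-- `f` is twice differentiable on `s` and satisfies Bessel's equation with parameter `ν` there.
The field is arbitrary so that real and complex solutions can be compared. -/
def IsBesselSolutionOn {𝕜 : Type*} [NontriviallyNormedField 𝕜] (ν : 𝕜) (f : 𝕜 → 𝕜) (s : Set 𝕜) :
    Prop :=
  (∀ z ∈ s, DifferentiableAt 𝕜 f z ∧ DifferentiableAt 𝕜 (deriv f) z) ∧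
    ∀ z ∈ s, z ^ 2 * deriv (deriv f) z + z * deriv f z + (z ^ 2 - ν ^ 2) * f z = 0

section PowerSeries

variable {𝕜 F : Type*} [NontriviallyNormedField 𝕜] [NormedAddCommGroup F] [NormedSpace 𝕜 F]
  [CompleteSpace F] {p : FormalMultilinearSeries 𝕜 𝕜 F} {z : 𝕜}

theorem hasSum_deriv_powerSeries (hz : ‖z‖ₑ < p.radius) :
    HasSum (fun n : ℕ ↦ z ^ n • (n + 1) • p.coeff (n + 1)) (deriv p.sum z) := by
  have hsum : HasSum (fun n ↦ p.derivSeries n fun _ ↦ z) (p.derivSeries.sum z) :=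
    p.derivSeries.hasSum <| by
      simpa [← edist_zero_right] using hz.trans_le p.radius_le_radius_derivSeries
  have happly := hsum.mapL (ContinuousLinearMap.apply 𝕜 F (1 : 𝕜))
  rw [(p.hasFDerivAt_sum hz).hasDerivAt.deriv]
  simpa using happly

theorem hasSum_smul_deriv_powerSeries (hz : ‖z‖ₑ < p.radius) :
    HasSum (fun n : ℕ ↦ z ^ n • n • p.coeff n) (z • deriv p.sum z) := by
  rw [← hasSum_nat_add_iff' 1]
  simpa [pow_succ', mul_smul] using (hasSum_deriv_powerSeries hz).const_smul z

end PowerSeries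

open Complex

section RegularizedHypergeometric

variable {a b : Multiset ℂ} {z : ℂ}

theorem succ_mul_regularizedHGFunCoeff_succ (a b : Multiset ℂ) (n : ℕ) :
    (n + 1) * regularizedHGFunCoeff a b (n + 1) =
      a.prod * regularizedHGFunCoeff (a.map (· + 1)) (b.map (· + 1)) n := by
  have hn : (n + 1 : ℂ) ≠ 0 := n.cast_add_one_ne_zero
  simp only [regularizedHGFunCoeff, ascPochhammer_succ_left, Nat.factorial_succ,
    Multiset.map_map, Function.comp_def, Polynomial.eval_mul, Polynomial.eval_X,
    Polynomial.eval_comp, Polynomial.eval_add, Polynomial.eval_one, Multiset.prod_map_mul,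
    Multiset.map_id', Nat.cast_mul, Nat.cast_add, Nat.cast_one, add_right_comm, add_assoc]
  field_simp

theorem regularizedHGFunCoeff_cons (a b : Multiset ℂ) (c : ℂ) (n : ℕ) :
    regularizedHGFunCoeff a (c ::ₘ b) n =
      (c + n) * regularizedHGFunCoeff a ((c + 1) ::ₘ b) n := by
  simp only [regularizedHGFunCoeff, Multiset.map_cons, Multiset.prod_cons, div_eq_mul_inv,
    mul_inv, one_div_Gamma_eq_self_mul_one_div_Gamma_add_one (c + n), add_right_comm c 1]
  ring

theorem regularizedHGFun_eq_tsum (a b : Multiset ℂ) (z : ℂ) :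
    regularizedHGFun a b z = ∑' n, z ^ n * regularizedHGFunCoeff a b n := by
  simp [regularizedHGFun, FormalMultilinearSeries.sum]

theorem hasDerivAt_regularizedHGFun (hz : ‖z‖ₑ < (regularizedHGFunSeries a b).radius) :
    HasDerivAt (regularizedHGFun a b)
      (a.prod * regularizedHGFun (a.map (· + 1)) (b.map (· + 1)) z) z := by
  have hderiv : deriv (regularizedHGFun a b) z =
      a.prod * regularizedHGFun (a.map (· + 1)) (b.map (· + 1)) z := by
    refine (hasSum_deriv_powerSeries hz).tsum_eq.symm.trans ?_
    rw [regularizedHGFun_eq_tsum, ← tsum_mul_left]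
    refine tsum_congr fun n ↦ ?_
    rw [mul_left_comm, ← succ_mul_regularizedHGFunCoeff_succ, regularizedHGFunSeries_coeff]
    simp
  rw [← hderiv]
  exact (FormalMultilinearSeries.hasFDerivAt_sum hz).differentiableAt.hasDerivAt

theorem regularizedHGFun_cons_eq_add_deriv {c : ℂ}
    (hz : ‖z‖ₑ < (regularizedHGFunSeries a ((c + 1) ::ₘ b)).radius) :
    regularizedHGFun a (c ::ₘ b) z = c * regularizedHGFun a ((c + 1) ::ₘ b) z +
      z * deriv (regularizedHGFun a ((c + 1) ::ₘ b)) z := by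
  have hsum := (regularizedHGFunSeries a ((c + 1) ::ₘ b)).hasSum (x := z)
    (by simpa [← edist_zero_right] using hz)
  refine Eq.trans ?_ ((hsum.mul_left c).add (hasSum_smul_deriv_powerSeries hz)).tsum_eq
  rw [regularizedHGFun_eq_tsum]
  refine tsum_congr fun n ↦ ?_
  rw [regularizedHGFunCoeff_cons, FormalMultilinearSeries.apply_eq_pow_smul_coeff,
    regularizedHGFunSeries_coeff]
  simp only [smul_eq_mul, nsmul_eq_mul]
  ring

theorem hasDerivAt_regularizedHGFun_zero_singleton (b z : ℂ) :
    HasDerivAt (regularizedHGFun 0 {b}) (regularizedHGFun 0 {b + 1} z) z := by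
  have hz : ‖z‖ₑ < (regularizedHGFunSeries 0 {b}).radius := by
    simp [radius_regularizedHGFunSeries_eq_top (a := 0) (b := {b}) (by simp)]
  simpa using hasDerivAt_regularizedHGFun hz

theorem regularizedHGFun_zero_singleton_eq_add (b z : ℂ) :
    regularizedHGFun 0 {b} z =
      b * regularizedHGFun 0 {b + 1} z + z * regularizedHGFun 0 {b + 1 + 1} z := by
  have hz : ‖z‖ₑ < (regularizedHGFunSeries 0 {b + 1}).radius := by
    simp [radius_regularizedHGFunSeries_eq_top (a := 0) (b := {b + 1}) (by simp)]
  rw [← (hasDerivAt_regularizedHGFun_zero_singleton (b + 1) z).deriv]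
  exact regularizedHGFun_cons_eq_add_deriv (b := 0) hz

end RegularizedHypergeometric

/-- The Bessel function of the first kind of complex order `ν`, on the principal branch of
`(z / 2) ^ ν`. Its series is the regularized `₀F₁` with parameter `ν + 1` at `-z ^ 2 / 4`, in which
Mathlib's convention `1 / Γ(-m) = 0` is the value of the entire function `1 / Γ`. -/
noncomputable def besselJ (ν z : ℂ) : ℂ :=
  (z / 2) ^ ν * regularizedHGFun 0 {ν + 1} (-z ^ 2 / 4)

theorem besselJ_ofReal (ν : ℝ) {x : ℝ} (hx : 0 ≤ x) :
    besselJ ν x = ((x / 2) ^ ν * ∑' n : ℕ, (-x ^ 2 / 4) ^ n /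
      ((n.factorial : ℝ) * Real.Gamma (ν + (n : ℝ) + 1)) : ℝ) := by
  rw [besselJ, regularizedHGFun_eq_tsum, ofReal_mul, ofReal_cpow (by positivity), ofReal_tsum]
  simp [regularizedHGFunCoeff, ← Gamma_ofReal, add_right_comm, div_eq_mul_inv]

section Bessel

variable {z : ℂ}

theorem div_two_mem_slitPlane (hz : z ∈ slitPlane) : z / 2 ∈ slitPlane := by
  simpa [mem_slitPlane_iff] using hz

theorem mul_besselJ_add_besselJ_add_two (ν : ℂ) (hz : z ≠ 0) :
    z * (besselJ ν z + besselJ (ν + 1 + 1) z) = 2 * (ν + 1) * besselJ (ν + 1) z := by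
  have hz2 : z / 2 ≠ 0 := by simpa using hz
  simp only [besselJ, cpow_add _ _ hz2, cpow_one]
  rw [regularizedHGFun_zero_singleton_eq_add (ν + 1)]
  ring

theorem hasDerivAt_besselJ (ν : ℂ) (hz : z ∈ slitPlane) :
    HasDerivAt (besselJ ν) (ν / z * besselJ ν z - besselJ (ν + 1) z) z := by
  have hz2 : z / 2 ≠ 0 := slitPlane_ne_zero (div_two_mem_slitPlane hz)
  have hpow : HasDerivAt (fun w : ℂ ↦ (w / 2) ^ ν) (ν * (z / 2) ^ (ν - 1) * (1 / 2)) z :=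
    ((hasDerivAt_id z).div_const 2).cpow_const (div_two_mem_slitPlane hz)
  have harg : HasDerivAt (fun w : ℂ ↦ -w ^ 2 / 4) (-(2 * z) / 4) z := by
    simpa using (hasDerivAt_pow 2 z).fun_neg.div_const 4
  have hseries := (hasDerivAt_regularizedHGFun_zero_singleton (ν + 1) (-z ^ 2 / 4)).comp z harg
  refine (hpow.mul hseries).congr_deriv ?_
  have hz0 := slitPlane_ne_zero hz
  simp only [besselJ, Function.comp_apply, cpow_add _ _ hz2, cpow_sub _ _ hz2, cpow_one]
  field_simp
  ring

theorem hasDerivAt_besselJ_add_one (ν : ℂ) (hz : z ∈ slitPlane) :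
    HasDerivAt (besselJ (ν + 1)) (besselJ ν z - (ν + 1) / z * besselJ (ν + 1) z) z := by
  have hz0 := slitPlane_ne_zero hz
  refine (hasDerivAt_besselJ (ν + 1) hz).congr_deriv ?_
  field_simp
  linear_combination -mul_besselJ_add_besselJ_add_two ν hz0

theorem hasDerivAt_deriv_besselJ (ν : ℂ) (hz : z ∈ slitPlane) :
    HasDerivAt (deriv (besselJ ν))
      (((ν ^ 2 - ν) / z ^ 2 - 1) * besselJ ν z + besselJ (ν + 1) z / z) z := by
  have hz0 := slitPlane_ne_zero hz
  have hderiv : deriv (besselJ ν) =ᶠ[nhds z]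
      fun w ↦ ν / w * besselJ ν w - besselJ (ν + 1) w := by
    filter_upwards [isOpen_slitPlane.mem_nhds hz] with w hw using (hasDerivAt_besselJ ν hw).deriv
  have hquot : HasDerivAt (fun w : ℂ ↦ ν / w) (-ν / z ^ 2) z := by
    simpa using (hasDerivAt_const z ν).fun_div (hasDerivAt_id z) hz0
  refine HasDerivAt.congr_of_eventuallyEq ?_ hderiv
  refine ((hquot.mul (hasDerivAt_besselJ ν hz)).sub
    (hasDerivAt_besselJ_add_one ν hz)).congr_deriv ?_
  field_simp
  ring

end Bessel

theorem IsBesselSolutionOn.of_eqOn_re {ν : ℝ} {f : ℂ → ℂ} {g : ℝ → ℝ} {U : Set ℂ} {s : Set ℝ}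
    (hf : IsBesselSolutionOn (ν : ℂ) f U) (hs : IsOpen s) (hsU : Set.MapsTo ofReal s U)
    (hg : ∀ x ∈ s, g x = (f x).re) : IsBesselSolutionOn ν g s := by
  have hderiv : ∀ x ∈ s, HasDerivAt g (deriv f x).re x := fun x hx ↦
    (hf.1 x (hsU hx)).1.hasDerivAt.real_of_complex.congr_of_eventuallyEq <|
      Set.EqOn.eventuallyEq_of_mem hg (hs.mem_nhds hx)
  have hderiv2 : ∀ x ∈ s, HasDerivAt (deriv g) (deriv (deriv f) x).re x := fun x hx ↦
    (hf.1 x (hsU hx)).2.hasDerivAt.real_of_complex.congr_of_eventuallyEq <|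
      Set.EqOn.eventuallyEq_of_mem (fun y hy ↦ (hderiv y hy).deriv) (hs.mem_nhds hx)
  refine ⟨fun x hx ↦ ⟨(hderiv x hx).differentiableAt, (hderiv2 x hx).differentiableAt⟩,
    fun x hx ↦ ?_⟩
  have hre := congrArg re (hf.2 x (hsU hx))
  rw [(hderiv x hx).deriv, (hderiv2 x hx).deriv, hg x hx]
  simpa only [← ofReal_pow, ← ofReal_sub, add_re, re_ofReal_mul, zero_re] using hre

theorem besselJ_solves_bessel_equation_general (ν : ℂ) :
    IsBesselSolutionOn ν (besselJ ν) slitPlane := by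
  refine ⟨fun z hz ↦ ⟨(hasDerivAt_besselJ ν hz).differentiableAt,
    (hasDerivAt_deriv_besselJ ν hz).differentiableAt⟩, fun z hz ↦ ?_⟩
  rw [(hasDerivAt_besselJ ν hz).deriv, (hasDerivAt_deriv_besselJ ν hz).deriv]
  have hz0 := slitPlane_ne_zero hz
  field_simp
  ring

/-- For real `ν ≥ 0`, the Bessel function of the first kind
`J_ν(z) = (z/2)^ν · Σ_{n≥0} (-z²/4)ⁿ/(n!·Γ(ν+n+1))` is twice differentiable on `(0,∞)`
and satisfies Bessel's equation `z²J'' + zJ' + (z² - ν²)J = 0` there. -/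
theorem besselJ_solves_bessel_equation
    (ν : ℝ) (hν : 0 ≤ ν) (J : ℝ → ℝ)
    (hJ : ∀ z > (0 : ℝ), J z = (z / 2) ^ ν *
      ∑' n : ℕ, (-z ^ 2 / 4) ^ n / ((n.factorial : ℝ) * Real.Gamma (ν + (n : ℝ) + 1))) :
    (∀ z > (0 : ℝ), DifferentiableAt ℝ J z ∧ DifferentiableAt ℝ (deriv J) z) ∧
      ∀ z > (0 : ℝ),
        z ^ 2 * deriv (deriv J) z + z * deriv J z + (z ^ 2 - ν ^ 2) * J z = 0 :=
  (besselJ_solves_bessel_equation_general ν).of_eqOn_re isOpen_Ioi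
    (fun _ hz ↦ ofReal_mem_slitPlane.2 hz)
    fun z hz ↦ by rw [hJ z hz, besselJ_ofReal ν (le_of_lt hz), ofReal_re]
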